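/- Let S ⊆ I1 with |S| = k (1 ≤ k < K), suppose the concatenation of the blocks {A_l : l ∈ S} has linearly independent columns, let P_S denote the orthogonal projection onto its column span, and set v = Σ_{l∈I1∖S} A_l x̃_l. Then for every l ∈ S, ‖A_l^T P_S v‖_2 = ‖A_l^T v‖_2 ≤ dμ_B (K−k) · max_{j∈I1∖S} ‖x̃_j‖_2. -/

import Mathlib

/- Setting: a measurement matrix `A ∈ ℝ^{m×n}` with `n = L·d`, partitioned into `L` column
blocks of size `m×d`; columns are indexed by pairs `(l, j)` (block `l`, position `j`). -/

noncomputable section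

open Finset Matrix

/-- Euclidean (ℓ₂) norm of a finitely indexed real vector. -/
def e2norm {ι : Type*} [Fintype ι] (v : ι → ℝ) : ℝ := Real.sqrt (∑ i, v i ^ 2)

/-- Euclidean inner (dot) product of two real vectors. -/
def dotp {ι : Type*} [Fintype ι] (u v : ι → ℝ) : ℝ := ∑ i, u i * v i

/-- The `(l, j)` column of the block matrix `A` (block `l`, position `j` inside the block). -/
def acol {m L d : ℕ} (A : Matrix (Fin m) (Fin L × Fin d) ℝ) (l : Fin L) (j : Fin d) :
    Fin m → ℝ :=
  fun i => A i (l, j)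

/-- `A_lᵀ v` : correlation of the `l`-th block of `A` with a vector `v ∈ ℝ^m`. -/
def blkT {m L d : ℕ} (A : Matrix (Fin m) (Fin L × Fin d) ℝ) (l : Fin L) (v : Fin m → ℝ) :
    Fin d → ℝ :=
  fun j => dotp (acol A l j) v

/-- Spectral norm (largest singular value) `ρ(X)` of a real matrix, as the supremum of
`‖Xu‖₂ / ‖u‖₂` over nonzero `u`. -/
def specNorm {p q : ℕ} (X : Matrix (Fin p) (Fin q) ℝ) : ℝ :=
  ⨆ u : {u : Fin q → ℝ // u ≠ 0}, e2norm (X *ᵥ u.1) / e2norm u.1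

/-- The `d × d` cross-Gram matrix `A_iᵀ A_j` of two blocks of `A`. -/
def bgram {m L d : ℕ} (A : Matrix (Fin m) (Fin L × Fin d) ℝ) (i j : Fin L) :
    Matrix (Fin d) (Fin d) ℝ :=
  fun a b => dotp (acol A i a) (acol A j b)

/-- Block-coherence `μ_B = max_{i ≠ j} (1/d) ρ(A_iᵀ A_j)`. -/
def blockCoh {m L d : ℕ} (A : Matrix (Fin m) (Fin L × Fin d) ℝ) : ℝ :=
  ⨆ p : {p : Fin L × Fin L // p.1 ≠ p.2},
    (1 / (d : ℝ)) * specNorm (bgram A p.1.1 p.1.2)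

/-- Sub-coherence `ν`: the maximum of `|a_iᵀ a_j|` over pairs of distinct columns lying in the
same block of `A`. -/
def subCoh {m L d : ℕ} (A : Matrix (Fin m) (Fin L × Fin d) ℝ) : ℝ :=
  ⨆ t : {t : Fin L × Fin d × Fin d // t.2.1 ≠ t.2.2},
    |dotp (acol A t.1.1 t.1.2.1) (acol A t.1.1 t.1.2.2)|

theorem e2norm_eq {ι : Type*} [Fintype ι] (v : ι → ℝ) : e2norm v = ‖WithLp.toLp 2 v‖ := by
  simp [e2norm, EuclideanSpace.norm_eq]

theorem e2norm_nonneg {ι : Type*} [Fintype ι] (v : ι → ℝ) : 0 ≤ e2norm v := Real.sqrt_nonneg _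

theorem e2norm_pos {ι : Type*} [Fintype ι] (v : ι → ℝ) (h : v ≠ 0) : 0 < e2norm v := by
  rw [e2norm_eq, norm_pos_iff]
  simpa using h

theorem e2norm_sum_le {ι κ : Type*} [Fintype ι] (s : Finset κ) (f : κ → ι → ℝ) :
    e2norm (∑ a ∈ s, f a) ≤ ∑ a ∈ s, e2norm (f a) := by
  simp only [e2norm_eq, WithLp.toLp_sum]
  exact norm_sum_le _ _

theorem e2norm_mulVec_le_frob {p q : ℕ} (X : Matrix (Fin p) (Fin q) ℝ) (u : Fin q → ℝ) :
    e2norm (X *ᵥ u) ≤ Real.sqrt (∑ i, ∑ j, X i j ^ 2) * e2norm u := by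
  unfold e2norm
  rw [← Real.sqrt_mul (by positivity)]
  apply Real.sqrt_le_sqrt
  rw [Finset.sum_mul]
  apply Finset.sum_le_sum
  intro i _
  exact Finset.sum_mul_sq_le_sq_mul_sq Finset.univ (fun j => X i j) u

theorem e2norm_mulVec_le {p q : ℕ} (X : Matrix (Fin p) (Fin q) ℝ) (u : Fin q → ℝ) :
    e2norm (X *ᵥ u) ≤ specNorm X * e2norm u := by
  by_cases hu : u = 0
  · subst hu
    simp [e2norm]
  rw [← div_le_iff₀ (e2norm_pos u hu)]
  have hb : BddAbove (Set.range fun u : {u : Fin q → ℝ // u ≠ 0} =>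
      e2norm (X *ᵥ u.1) / e2norm u.1) := by
    refine ⟨Real.sqrt (∑ i, ∑ j, X i j ^ 2), ?_⟩
    rintro _ ⟨w, rfl⟩
    exact (div_le_iff₀ (e2norm_pos w.1 w.2)).2 (e2norm_mulVec_le_frob X w.1)
  exact le_ciSup hb ⟨u, hu⟩

theorem specNorm_nonneg {p q : ℕ} (X : Matrix (Fin p) (Fin q) ℝ) : 0 ≤ specNorm X :=
  Real.iSup_nonneg fun _ => div_nonneg (e2norm_nonneg _) (e2norm_nonneg _)

theorem specNorm_le {m L d : ℕ} (hd : 0 < d) (A : Matrix (Fin m) (Fin L × Fin d) ℝ)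
    (i j : Fin L) (h : i ≠ j) : specNorm (bgram A i j) ≤ d * blockCoh A := by
  have h1 : (1 / (d : ℝ)) * specNorm (bgram A i j) ≤ blockCoh A :=
    le_ciSup (f := fun p : {p : Fin L × Fin L // p.1 ≠ p.2} =>
      (1 / (d : ℝ)) * specNorm (bgram A p.1.1 p.1.2)) (Set.finite_range _).bddAbove ⟨(i, j), h⟩
  have hd' : (0 : ℝ) < d := by exact_mod_cast hd
  rw [one_div, inv_mul_le_iff₀ hd'] at h1
  exact h1

theorem blkT_sum {m L d : ℕ} (A : Matrix (Fin m) (Fin L × Fin d) ℝ) (l : Fin L)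
    (T : Finset (Fin L)) (x : Fin L → Fin d → ℝ) :
    blkT A l (fun i => ∑ a ∈ T, ∑ j, A i (a, j) * x a j) =
      ∑ a ∈ T, bgram A l a *ᵥ x a := by
  funext b
  simp only [blkT, dotp, acol, Finset.sum_apply, Matrix.mulVec, dotProduct, bgram,
    Finset.mul_sum, Finset.sum_mul]
  rw [Finset.sum_comm]
  refine Finset.sum_congr rfl fun a _ => ?_
  rw [Finset.sum_comm]
  refine Finset.sum_congr rfl fun j _ => Finset.sum_congr rfl fun i _ => ?_
  ring

/-- **Eq. (37) of the paper (first case of Appendix B).**  For `S ⊆ I1` with `|S| = k`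
(`1 ≤ k < K`), if the concatenation of the blocks `A_l, l ∈ S` has linearly independent
columns and `P_S v` is the orthogonal projection of `v = Σ_{l ∈ I1∖S} A_l x̃_l` onto their
span, then for every `l ∈ S`,
`‖A_lᵀ P_S v‖₂ = ‖A_lᵀ v‖₂ ≤ dμ_B (K-k) · max_{j ∈ I1∖S} ‖x̃_j‖₂`. -/
theorem stmt9 {m L d K k : ℕ}
    (hm : m < L * d) (hd : 0 < d)
    (A : Matrix (Fin m) (Fin L × Fin d) ℝ)
    (hA : ∀ l j, e2norm (acol A l j) = 1)
    (μB : ℝ) (hμB : μB = blockCoh A)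
    (I1 : Finset (Fin L)) (hcard : I1.card = K) (hKL : K < L)
    (S : Finset (Fin L)) (hS : S ⊆ I1) (hSk : S.card = k) (hk1 : 1 ≤ k) (hk : k < K)
    (hind : LinearIndependent ℝ
      (fun c : {l : Fin L // l ∈ S} × Fin d => fun i => A i (c.1.1, c.2)))
    (xt : Fin L → Fin d → ℝ)
    (v : Fin m → ℝ) (hv : v = fun i => ∑ l ∈ I1 \ S, ∑ j, A i (l, j) * xt l j)
    (PSv : Fin m → ℝ)
    (hPSv1 : ∃ c : Fin L → Fin d → ℝ, ∀ i, PSv i = ∑ l ∈ S, ∑ j, A i (l, j) * c l j)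
    (hPSv2 : ∀ l ∈ S, ∀ j, dotp (acol A l j) (fun i => v i - PSv i) = 0) :
    ∀ l ∈ S, e2norm (blkT A l PSv) = e2norm (blkT A l v) ∧
      e2norm (blkT A l v) ≤ (d : ℝ) * μB * ((K : ℝ) - (k : ℝ)) *
        ⨆ j : {j : Fin L // j ∈ I1 \ S}, e2norm (xt j.1) := by
  intro l hl
  constructor
  · congr 1
    funext j
    have h := hPSv2 l hl j
    simp only [dotp, mul_sub, Finset.sum_sub_distrib] at h
    simp only [blkT, dotp]
    linarith
  · have hc : ((I1 \ S).card : ℝ) = (K : ℝ) - k := by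
      rw [Finset.card_sdiff_of_subset hS, hcard, hSk, Nat.cast_sub hk.le]
    rw [hv, blkT_sum, hμB]
    refine (e2norm_sum_le _ _).trans ?_
    set M := ⨆ j : {j : Fin L // j ∈ I1 \ S}, e2norm (xt j.1) with hM
    have hb : ∀ a ∈ I1 \ S, e2norm (bgram A l a *ᵥ xt a) ≤ (d : ℝ) * blockCoh A * M := by
      intro a ha
      have hne : l ≠ a := by
        rintro rfl
        exact (Finset.mem_sdiff.1 ha).2 hl
      have h2 : e2norm (xt a) ≤ M :=
        le_ciSup (f := fun j : {j : Fin L // j ∈ I1 \ S} => e2norm (xt j.1))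
          (Set.finite_range _).bddAbove ⟨a, ha⟩
      have h3 := specNorm_le hd A l a hne
      exact (e2norm_mulVec_le _ _).trans (mul_le_mul h3 h2 (e2norm_nonneg _)
        ((specNorm_nonneg _).trans h3))
    refine (Finset.sum_le_card_nsmul _ _ _ hb).trans (le_of_eq ?_)
    rw [nsmul_eq_mul, hc]
    ring
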